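/- There exists a constant C > 0 such that for every D > 0, every B > D⁶, every m ∈ ℤ with δ̃₁ > D, and every ψ in the form domain of q_m: q_m[ψ] ≥ (Θ₀ + C·D²·B^{−1/3})·‖ψ‖². -/

import Mathlib

noncomputable section
open MeasureTheory Real Filter Set Topology

/-- The de Gennes energy `λ₁^𝒢(ξ)`. -/
def deGennes (ξ : ℝ) : ℝ :=
  sInf { q : ℝ | ∃ u : ℝ → ℂ, ContDiff ℝ 1 u ∧
    IntegrableOn (fun t => ‖u t‖ ^ 2) (Ioi 0) ∧
    IntegrableOn (fun t => ‖deriv u t‖ ^ 2 + (t + ξ) ^ 2 * ‖u t‖ ^ 2) (Ioi 0) ∧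
    0 < (∫ t in Ioi (0:ℝ), ‖u t‖ ^ 2) ∧
    q = (∫ t in Ioi (0:ℝ), (‖deriv u t‖ ^ 2 + (t + ξ) ^ 2 * ‖u t‖ ^ 2)) /
        ∫ t in Ioi (0:ℝ), ‖u t‖ ^ 2 }

/-- `Θ₀`, the infimum of the de Gennes energy. -/
def Theta0 : ℝ := ⨅ ξ : ℝ, deGennes ξ

/-- The half plane `ℝ²₊ = {(τ, ρ) : τ > 0}`. -/
def halfPlane : Set (ℝ × ℝ) := Ioi (0:ℝ) ×ˢ (univ : Set ℝ)

/-- The potential of the effective operator `Q_m(B)`. -/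
def qPot (B : ℝ) (m : ℤ) (p : ℝ × ℝ) : ℝ :=
  (p.1 + ((m : ℝ) - B / 2) / Real.sqrt B + B ^ (-(1:ℝ)/6) * p.2 ^ 2 / 2) ^ 2

/-- The integrand of the quadratic form `q_m`. -/
def qIntegrand (B : ℝ) (m : ℤ) (ψ : ℝ × ℝ → ℂ) (p : ℝ × ℝ) : ℝ :=
  ‖fderiv ℝ ψ p (1, 0)‖ ^ 2 + qPot B m p * ‖ψ p‖ ^ 2
    + B ^ (-(1:ℝ)/3) * ‖fderiv ℝ ψ p (0, 1)‖ ^ 2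

/-- The quadratic form `q_m[ψ]`. -/
def qForm (B : ℝ) (m : ℤ) (ψ : ℝ × ℝ → ℂ) : ℝ :=
  ∫ p in halfPlane, qIntegrand B m ψ p

/-- Membership in the form domain of `q_m`. -/
def InFormDomain (B : ℝ) (m : ℤ) (ψ : ℝ × ℝ → ℂ) : Prop :=
  ContDiff ℝ 1 ψ ∧ IntegrableOn (fun p => ‖ψ p‖ ^ 2) halfPlane ∧
    IntegrableOn (qIntegrand B m ψ) halfPlane

/-- The rescaled momentum `δ̃₁ = ((m - B/2)/√B - ξ₀)·B^{1/6}`. -/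
def delta1 (B : ℝ) (m : ℤ) (ξ₀ : ℝ) : ℝ :=
  (((m : ℝ) - B / 2) / Real.sqrt B - ξ₀) * B ^ ((1:ℝ)/6)

/-- Second derivative in the `τ` direction. -/
def d2τ (ψ : ℝ × ℝ → ℂ) (p : ℝ × ℝ) : ℂ :=
  fderiv ℝ (fun q => fderiv ℝ ψ q ((1:ℝ), (0:ℝ))) p (1, 0)

/-- Second derivative in the `ρ` direction. -/
def d2ρ (ψ : ℝ × ℝ → ℂ) (p : ℝ × ℝ) : ℂ :=
  fderiv ℝ (fun q => fderiv ℝ ψ q ((0:ℝ), (1:ℝ))) p (0, 1)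

/-- An eigenfunction of the model operator `Q_m(B)` on the half plane, with Neumann
boundary condition at `τ = 0`, eigenvalue `lam`, which is nonzero, smooth up to the
boundary, and lies in `L²` together with its first derivatives. -/
def IsQEigenfunction (B : ℝ) (m : ℤ) (lam : ℝ) (ψ : ℝ × ℝ → ℂ) : Prop :=
  ContDiff ℝ (⊤ : ℕ∞) ψ ∧
  IntegrableOn (fun p => ‖ψ p‖ ^ 2) halfPlane ∧
  IntegrableOn (fun p => ‖fderiv ℝ ψ p ((1:ℝ), (0:ℝ))‖ ^ 2) halfPlane ∧
  IntegrableOn (fun p => ‖fderiv ℝ ψ p ((0:ℝ), (1:ℝ))‖ ^ 2) halfPlane ∧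
  0 < (∫ p in halfPlane, ‖ψ p‖ ^ 2) ∧
  (∀ p ∈ halfPlane,
    -d2τ ψ p - ((B ^ (-(1:ℝ)/3) : ℝ) : ℂ) * d2ρ ψ p + ((qPot B m p : ℝ) : ℂ) * ψ p
      = (lam : ℂ) * ψ p) ∧
  (∀ ρ : ℝ, fderiv ℝ ψ ((0:ℝ), ρ) ((1:ℝ), (0:ℝ)) = 0)

/-!
For fixed `ρ` the integrand of `q_m` dominates the energy density of the de Gennes operator with
parameter `ξ ≥ (m - B/2)/√B > ξ₀ + D·B^{-1/6}`, so it suffices that `λ₁^𝒢(ξ) - Θ₀` is bounded below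
by a multiple of `min(ξ - ξ₀, 1)²` to the right of `ξ₀`.

Let `u` be a trial function at `ξ ≤ 0` with mass `N` and energy `Q`, and let `l = ξ - ξ₀`. Extending
`u` by the constant `u(0)` to `(-l, ∞)` gives a trial function at `ξ₀` whose energy exceeds `Q` by
`|u(0)|²` times an explicit cubic in `l`; since `ξ₀² ≤ Θ₀`, this gives
`Q ≥ Θ₀ N + (2/3) l² |ξ₀| |u(0)|²`. On the other hand `‖u′ + (t + ξ)u‖² ≥ 0` integrates to the
virial bound `Q ≥ N - |ξ₀| |u(0)|²`. Eliminating `|u(0)|²` leaves `Q ≥ (Θ₀ + k)/(1 + k) N` with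
`k = (2/3) l²`, and the gap follows from `Θ₀ < 1`.

The bound `ξ₀² ≤ Θ₀` comes from the same elimination, with `u` restricted to `(l, ∞)` for a small
`l > 0` instead of being extended: if `ξ² > Θ₀` then `(t + ξ)² > Θ₀` for small `t`, and the mass of
`u` near the boundary plays the role of `|u(0)|²`.
-/

open scoped RealInnerProductSpace

/-! ### Form domain on half lines and the virial identity -/

section HalfLine

variable {E : Type*} [NormedAddCommGroup E]

/-- The energy density `|u′|² + (t + ξ)²|u|²` of the de Gennes operator on a half line. It is
defined for vector-valued `u`, since only the norm enters. -/
def energyDensity [NormedSpace ℝ E] (ξ : ℝ) (u : ℝ → E) (t : ℝ) : ℝ :=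
  ‖deriv u t‖ ^ 2 + (t + ξ) ^ 2 * ‖u t‖ ^ 2

/-- The form domain of the de Gennes operator on `(a, ∞)`, restricted, as in `deGennes`, to
functions which are `C¹` on the whole line. -/
structure FiniteEnergy [NormedSpace ℝ E] (ξ a : ℝ) (u : ℝ → E) : Prop where
  contDiff : ContDiff ℝ 1 u
  integrableOn_norm_sq : IntegrableOn (fun t => ‖u t‖ ^ 2) (Ioi a)
  integrableOn_energyDensity : IntegrableOn (energyDensity ξ u) (Ioi a)

section NormedSpace

variable [NormedSpace ℝ E] {ξ a b : ℝ} {u : ℝ → E}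

theorem energyDensity_nonneg (ξ : ℝ) (u : ℝ → E) (t : ℝ) : 0 ≤ energyDensity ξ u t := by
  unfold energyDensity
  positivity

theorem mul_norm_sq_le_energyDensity (ξ : ℝ) (u : ℝ → E) (t : ℝ) :
    (t + ξ) ^ 2 * ‖u t‖ ^ 2 ≤ energyDensity ξ u t :=
  le_add_of_nonneg_left (sq_nonneg _)

theorem continuous_energyDensity (hu : ContDiff ℝ 1 u) (ξ : ℝ) :
    Continuous (energyDensity ξ u) := by
  have hcont := hu.continuous
  unfold energyDensity
  fun_prop

theorem energyDensity_comp_add_const (ξ a : ℝ) (u : ℝ → E) (t : ℝ) :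
    energyDensity (ξ + a) (fun s => u (s + a)) t = energyDensity ξ u (t + a) := by
  simp only [energyDensity, deriv_comp_add_const]
  ring

theorem integral_Ioi_zero_comp_add_right (f : ℝ → ℝ) (a : ℝ) :
    ∫ t in Ioi (0 : ℝ), f (t + a) = ∫ t in Ioi a, f t := by
  simpa using (measurePreserving_add_right volume a).setIntegral_preimage_emb
    (measurableEmbedding_addRight a) f (Ioi a)

theorem integrableOn_Ioi_zero_comp_add_right {f : ℝ → ℝ} (hf : IntegrableOn f (Ioi a)) :
    IntegrableOn (fun t => f (t + a)) (Ioi 0) := by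
  simpa [Function.comp_def] using ((measurePreserving_add_right volume a).integrableOn_comp_preimage
    (measurableEmbedding_addRight a)).2 hf

namespace FiniteEnergy

theorem continuous_norm_sq (hu : FiniteEnergy ξ a u) : Continuous fun t => ‖u t‖ ^ 2 :=
  hu.contDiff.continuous.norm.pow 2

theorem mono (hu : FiniteEnergy ξ a u) (hab : a ≤ b) : FiniteEnergy ξ b u :=
  ⟨hu.contDiff, hu.integrableOn_norm_sq.mono_set (Ioi_subset_Ioi hab),
    hu.integrableOn_energyDensity.mono_set (Ioi_subset_Ioi hab)⟩

theorem comp_add_right (hu : FiniteEnergy ξ a u) :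
    FiniteEnergy (ξ + a) 0 fun t => u (t + a) where
  contDiff := hu.contDiff.comp (contDiff_id.add contDiff_const)
  integrableOn_norm_sq := integrableOn_Ioi_zero_comp_add_right hu.integrableOn_norm_sq
  integrableOn_energyDensity := by
    simpa only [← energyDensity_comp_add_const] using
      integrableOn_Ioi_zero_comp_add_right hu.integrableOn_energyDensity

theorem integral_norm_sq_eq_add (hu : FiniteEnergy ξ a u) (hab : a ≤ b) :
    ∫ t in Ioi a, ‖u t‖ ^ 2 = (∫ t in a..b, ‖u t‖ ^ 2) + ∫ t in Ioi b, ‖u t‖ ^ 2 :=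
  (intervalIntegral.integral_interval_add_Ioi hu.integrableOn_norm_sq
    (hu.mono hab).integrableOn_norm_sq).symm

theorem integral_energyDensity_eq_add (hu : FiniteEnergy ξ a u) (hab : a ≤ b) :
    ∫ t in Ioi a, energyDensity ξ u t =
      (∫ t in a..b, energyDensity ξ u t) + ∫ t in Ioi b, energyDensity ξ u t :=
  (intervalIntegral.integral_interval_add_Ioi hu.integrableOn_energyDensity
    (hu.mono hab).integrableOn_energyDensity).symm

end FiniteEnergy

end NormedSpace

section Virial

variable [InnerProductSpace ℝ E] {ξ a : ℝ} {u : ℝ → E}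

theorem energyDensity_eq_norm_add_smul_sq_sub (ξ : ℝ) (u : ℝ → E) (t : ℝ) :
    energyDensity ξ u t =
      ‖deriv u t + (t + ξ) • u t‖ ^ 2 - (t + ξ) * (2 * ⟪u t, deriv u t⟫) := by
  rw [energyDensity, norm_add_sq_real, inner_smul_right, real_inner_comm, norm_smul, mul_pow,
    Real.norm_eq_abs, sq_abs]
  ring

theorem abs_mul_inner_deriv_le_energyDensity (ξ : ℝ) (u : ℝ → E) (t : ℝ) :
    |(t + ξ) * (2 * ⟪u t, deriv u t⟫)| ≤ energyDensity ξ u t := by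
  have hsub : ‖deriv u t - (t + ξ) • u t‖ ^ 2 =
      energyDensity ξ u t - (t + ξ) * (2 * ⟪u t, deriv u t⟫) := by
    rw [energyDensity, norm_sub_sq_real, inner_smul_right, real_inner_comm, norm_smul, mul_pow,
      Real.norm_eq_abs, sq_abs]
    ring
  have hadd := energyDensity_eq_norm_add_smul_sq_sub ξ u t
  rw [abs_le]
  constructor <;>
    linarith [sq_nonneg ‖deriv u t - (t + ξ) • u t‖, sq_nonneg ‖deriv u t + (t + ξ) • u t‖]

theorem hasDerivAt_mul_norm_sq (hu : Differentiable ℝ u) (ξ t : ℝ) :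
    HasDerivAt (fun t => (t + ξ) * ‖u t‖ ^ 2)
      (‖u t‖ ^ 2 + (t + ξ) * (2 * ⟪u t, deriv u t⟫)) t := by
  simpa using ((hasDerivAt_id t).add_const ξ).fun_mul (hu t).hasDerivAt.norm_sq

namespace FiniteEnergy

theorem integrableOn_mul_norm_sq (hu : FiniteEnergy ξ a u) :
    IntegrableOn (fun t => (t + ξ) * ‖u t‖ ^ 2) (Ioi a) := by
  have hcont := hu.continuous_norm_sq
  refine (hu.integrableOn_norm_sq.add hu.integrableOn_energyDensity).mono'
    (by fun_prop) (ae_of_all _ fun t => ?_)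
  have habs : |t + ξ| ≤ 1 + (t + ξ) ^ 2 := by
    rw [← sq_abs]
    nlinarith [sq_nonneg (|t + ξ| - 1), abs_nonneg (t + ξ)]
  calc ‖(t + ξ) * ‖u t‖ ^ 2‖ = |t + ξ| * ‖u t‖ ^ 2 := by
        rw [norm_mul, Real.norm_eq_abs, norm_pow, norm_norm]
    _ ≤ (1 + (t + ξ) ^ 2) * ‖u t‖ ^ 2 := by gcongr
    _ = ‖u t‖ ^ 2 + (t + ξ) ^ 2 * ‖u t‖ ^ 2 := by ring
    _ ≤ ‖u t‖ ^ 2 + energyDensity ξ u t := by gcongr; exact mul_norm_sq_le_energyDensity ξ u t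

theorem integrableOn_mul_inner_deriv (hu : FiniteEnergy ξ a u) :
    IntegrableOn (fun t => (t + ξ) * (2 * ⟪u t, deriv u t⟫)) (Ioi a) := by
  have hcont := hu.contDiff.continuous
  have hderiv := hu.contDiff.continuous_deriv_one
  exact hu.integrableOn_energyDensity.mono' (by fun_prop)
    (ae_of_all _ fun t => abs_mul_inner_deriv_le_energyDensity ξ u t)

theorem integral_mul_inner_deriv (hu : FiniteEnergy ξ a u) :
    ∫ t in Ioi a, (t + ξ) * (2 * ⟪u t, deriv u t⟫) =
      -((∫ t in Ioi a, ‖u t‖ ^ 2) + (a + ξ) * ‖u a‖ ^ 2) := by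
  have hd := hasDerivAt_mul_norm_sq (hu.contDiff.differentiable one_ne_zero) ξ
  have hint := hu.integrableOn_norm_sq.add hu.integrableOn_mul_inner_deriv
  have hftc := integral_Ioi_of_hasDerivAt_of_tendsto' (fun t _ => hd t) hint
    (tendsto_zero_of_hasDerivAt_of_integrableOn_Ioi (fun t _ => hd t) hint
      hu.integrableOn_mul_norm_sq)
  rw [integral_add hu.integrableOn_norm_sq hu.integrableOn_mul_inner_deriv] at hftc
  linarith

theorem integral_norm_sq_add_le (hu : FiniteEnergy ξ a u) :
    (∫ t in Ioi a, ‖u t‖ ^ 2) + (a + ξ) * ‖u a‖ ^ 2 ≤ ∫ t in Ioi a, energyDensity ξ u t := by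
  rw [← neg_neg (_ + _), ← hu.integral_mul_inner_deriv, ← integral_neg]
  refine integral_mono hu.integrableOn_mul_inner_deriv.neg hu.integrableOn_energyDensity fun t => ?_
  exact (neg_le_abs _).trans (abs_mul_inner_deriv_le_energyDensity ξ u t)

end FiniteEnergy

end Virial

end HalfLine

/-! ### Gaussian trial functions -/

/-- The ground state `exp (-(t + ξ)² / 2)` of the harmonic oscillator on the whole line, the trial
function showing that the boundary lowers the energy. -/
def gaussianTrial (ξ t : ℝ) : ℂ := Real.exp (-(t + ξ) ^ 2 / 2)

theorem norm_gaussianTrial_sq (ξ t : ℝ) :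
    ‖gaussianTrial ξ t‖ ^ 2 = Real.exp (-1 * (t + ξ) ^ 2) := by
  rw [gaussianTrial, Complex.norm_real, Real.norm_of_nonneg (Real.exp_pos _).le,
    ← Real.exp_nat_mul]
  congr 1
  push_cast
  ring

theorem deriv_gaussianTrial (ξ t : ℝ) :
    deriv (gaussianTrial ξ) t = -((t + ξ) • gaussianTrial ξ t) := by
  have hexponent : HasDerivAt (fun t : ℝ => -(t + ξ) ^ 2 / 2) (-(t + ξ)) t := by
    refine ((((hasDerivAt_id t).add_const ξ).fun_pow 2).fun_neg.div_const 2).congr_deriv ?_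
    simp only [id_eq]
    ring
  rw [show gaussianTrial ξ = fun t => ((Real.exp (-(t + ξ) ^ 2 / 2) : ℝ) : ℂ) from rfl,
    hexponent.exp.ofReal_comp.deriv, Complex.real_smul]
  push_cast
  ring

theorem contDiff_gaussianTrial (ξ : ℝ) : ContDiff ℝ 1 (gaussianTrial ξ) :=
  Complex.ofRealCLM.contDiff.comp
    (by fun_prop : ContDiff ℝ 1 fun t : ℝ => Real.exp (-(t + ξ) ^ 2 / 2))

theorem finiteEnergy_gaussianTrial (ξ a : ℝ) : FiniteEnergy ξ a (gaussianTrial ξ) where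
  contDiff := contDiff_gaussianTrial ξ
  integrableOn_norm_sq := by
    simp only [norm_gaussianTrial_sq]
    exact ((integrable_exp_neg_mul_sq one_pos).comp_add_right ξ).integrableOn
  integrableOn_energyDensity := by
    have hdensity : energyDensity ξ (gaussianTrial ξ) =
        fun t => 2 * ((t + ξ) ^ (2 : ℝ) * Real.exp (-1 * (t + ξ) ^ 2)) := by
      ext t
      rw [energyDensity, deriv_gaussianTrial, norm_neg, norm_smul, mul_pow, Real.norm_eq_abs,
        sq_abs, norm_gaussianTrial_sq, Real.rpow_two]
      ring
    rw [hdensity]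
    exact (((integrable_rpow_mul_exp_neg_mul_sq one_pos (by norm_num)).comp_add_right
      ξ).const_mul 2).integrableOn

theorem integral_norm_gaussianTrial_sq_pos (ξ a : ℝ) :
    0 < ∫ t in Ioi a, ‖gaussianTrial ξ t‖ ^ 2 := by
  rw [integral_pos_iff_support_of_nonneg (fun t => by positivity)
    (finiteEnergy_gaussianTrial ξ a).integrableOn_norm_sq]
  have hsupport : Function.support (fun t => ‖gaussianTrial ξ t‖ ^ 2) = univ := by
    ext t
    simp [norm_gaussianTrial_sq]
  simp [hsupport]

theorem integral_energyDensity_gaussianTrial (ξ a : ℝ) :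
    ∫ t in Ioi a, energyDensity ξ (gaussianTrial ξ) t =
      (∫ t in Ioi a, ‖gaussianTrial ξ t‖ ^ 2) + (a + ξ) * ‖gaussianTrial ξ a‖ ^ 2 := by
  have hdensity : energyDensity ξ (gaussianTrial ξ) =
      fun t => -((t + ξ) * (2 * ⟪gaussianTrial ξ t, deriv (gaussianTrial ξ) t⟫)) := by
    ext t
    simp [energyDensity_eq_norm_add_smul_sq_sub, deriv_gaussianTrial]
  rw [hdensity, integral_neg, (finiteEnergy_gaussianTrial ξ a).integral_mul_inner_deriv, neg_neg]

/-! ### The de Gennes energy and its infimum -/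

theorem le_deGennes {ξ c : ℝ}
    (hc : ∀ u : ℝ → ℂ, FiniteEnergy ξ 0 u →
      c * (∫ t in Ioi (0 : ℝ), ‖u t‖ ^ 2) ≤ ∫ t in Ioi (0 : ℝ), energyDensity ξ u t) :
    c ≤ deGennes ξ := by
  have hgauss := finiteEnergy_gaussianTrial ξ 0
  refine le_csInf ⟨_, gaussianTrial ξ, hgauss.1, hgauss.2, hgauss.3,
    integral_norm_gaussianTrial_sq_pos ξ 0, rfl⟩ ?_
  rintro q ⟨u, hu, hmass, henergy, hpos, rfl⟩
  exact (le_div_iff₀ hpos).2 (hc u ⟨hu, hmass, henergy⟩)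

theorem deGennes_nonneg (ξ : ℝ) : 0 ≤ deGennes ξ :=
  le_deGennes fun u _ => by
    simpa using integral_nonneg fun t => energyDensity_nonneg ξ u t

theorem Theta0_le_deGennes (ξ : ℝ) : Theta0 ≤ deGennes ξ :=
  ciInf_le ⟨0, by rintro _ ⟨η, rfl⟩; exact deGennes_nonneg η⟩ ξ

theorem one_le_deGennes {ξ : ℝ} (hξ : 0 ≤ ξ) : 1 ≤ deGennes ξ :=
  le_deGennes fun u hu => by
    have hboundary : 0 ≤ (0 + ξ) * ‖u 0‖ ^ 2 := by positivity
    linarith [hu.integral_norm_sq_add_le]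

namespace FiniteEnergy

variable {ξ a : ℝ} {u : ℝ → ℂ}

theorem deGennes_mul_le (hu : FiniteEnergy ξ 0 u) :
    deGennes ξ * (∫ t in Ioi (0 : ℝ), ‖u t‖ ^ 2) ≤ ∫ t in Ioi (0 : ℝ), energyDensity ξ u t := by
  have hnonneg : 0 ≤ ∫ t in Ioi (0 : ℝ), ‖u t‖ ^ 2 := integral_nonneg fun t => by positivity
  rcases hnonneg.eq_or_lt with hzero | hpos
  · rw [← hzero, mul_zero]
    exact integral_nonneg fun t => energyDensity_nonneg ξ u t
  · rw [← le_div_iff₀ hpos]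
    refine csInf_le ⟨0, ?_⟩ ⟨u, hu.1, hu.2, hu.3, hpos, rfl⟩
    rintro q ⟨v, -, -, -, hv, rfl⟩
    exact div_nonneg (integral_nonneg fun t => by positivity) hv.le

theorem Theta0_mul_le (hu : FiniteEnergy ξ a u) :
    Theta0 * (∫ t in Ioi a, ‖u t‖ ^ 2) ≤ ∫ t in Ioi a, energyDensity ξ u t := by
  have hshift := hu.comp_add_right.deGennes_mul_le
  simp only [energyDensity_comp_add_const] at hshift
  rw [integral_Ioi_zero_comp_add_right (fun t => ‖u t‖ ^ 2),
    integral_Ioi_zero_comp_add_right (energyDensity ξ u)] at hshift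
  refine le_trans ?_ hshift
  gcongr
  exact Theta0_le_deGennes _

end FiniteEnergy

theorem Theta0_lt_one : Theta0 < 1 := by
  have hle := (finiteEnergy_gaussianTrial (-1) 0).Theta0_mul_le
  rw [integral_energyDensity_gaussianTrial] at hle
  have hboundary : 0 < ‖gaussianTrial (-1) 0‖ ^ 2 := by
    rw [norm_gaussianTrial_sq]
    positivity
  by_contra! hone
  nlinarith [integral_norm_gaussianTrial_sq_pos (-1) 0]

theorem add_div_one_add_mul_le {θ k N z Q : ℝ} (hk : 0 ≤ k) (hgain : θ * N + k * z ≤ Q)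
    (hloss : N - z ≤ Q) : (θ + k) / (1 + k) * N ≤ Q := by
  rw [div_mul_eq_mul_div, div_le_iff₀ (by positivity)]
  nlinarith [mul_le_mul_of_nonneg_left hloss hk]

/-! ### A minimizer satisfies `ξ₀² ≤ Θ₀` -/

namespace FiniteEnergy

variable {ξ l : ℝ}

theorem Theta0_mul_add_le_of_nonpos {u : ℝ → ℂ} (hu : FiniteEnergy ξ 0 u) (hξ : ξ ≤ 0)
    (hl : 0 ≤ l) :
    Theta0 * (∫ t in Ioi (0 : ℝ), ‖u t‖ ^ 2) +
        (ξ ^ 2 + 2 * l * ξ - Theta0) * (∫ t in (0 : ℝ)..l, ‖u t‖ ^ 2) ≤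
      ∫ t in Ioi (0 : ℝ), energyDensity ξ u t := by
  have hnear : (ξ ^ 2 + 2 * l * ξ) * (∫ t in (0 : ℝ)..l, ‖u t‖ ^ 2) ≤
      ∫ t in (0 : ℝ)..l, energyDensity ξ u t := by
    rw [← intervalIntegral.integral_const_mul]
    refine intervalIntegral.integral_mono_on hl
      ((hu.continuous_norm_sq.intervalIntegrable _ _).const_mul _)
      ((continuous_energyDensity hu.contDiff ξ).intervalIntegrable _ _) fun t ht => ?_
    refine le_trans ?_ (mul_norm_sq_le_energyDensity ξ u t)
    gcongr
    nlinarith [ht.2, sq_nonneg t]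
  rw [hu.integral_norm_sq_eq_add hl, hu.integral_energyDensity_eq_add hl]
  linarith [(hu.mono hl).Theta0_mul_le]

theorem integral_norm_sq_sub_le {E : Type*} [NormedAddCommGroup E]
    [InnerProductSpace ℝ E] {u : ℝ → E} (hu : FiniteEnergy ξ 0 u) (hl : 0 < l) :
    (∫ t in Ioi (0 : ℝ), ‖u t‖ ^ 2) - (1 - ξ / l) * (∫ t in (0 : ℝ)..l, ‖u t‖ ^ 2) ≤
      ∫ t in Ioi (0 : ℝ), energyDensity ξ u t := by
  obtain ⟨c, hc, hmean⟩ := exists_eq_interval_average hl.ne hu.continuous_norm_sq.continuousOn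
  rw [uIoo_of_lt hl] at hc
  rw [interval_average_eq, sub_zero, smul_eq_mul] at hmean
  have hvirial := (hu.mono hc.1.le).integral_norm_sq_add_le
  have hmass : ∫ t in (0 : ℝ)..c, ‖u t‖ ^ 2 ≤ ∫ t in (0 : ℝ)..l, ‖u t‖ ^ 2 :=
    intervalIntegral.integral_mono_interval le_rfl hc.1.le hc.2.le
      (ae_of_all _ fun t => by positivity) (hu.continuous_norm_sq.intervalIntegrable _ _)
  have henergy : 0 ≤ ∫ t in (0 : ℝ)..c, energyDensity ξ u t :=
    intervalIntegral.integral_nonneg hc.1.le fun t _ => energyDensity_nonneg ξ u t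
  have hboundary : ξ / l * (∫ t in (0 : ℝ)..l, ‖u t‖ ^ 2) ≤ (c + ξ) * ‖u c‖ ^ 2 := by
    have hshift : ξ * ‖u c‖ ^ 2 ≤ (c + ξ) * ‖u c‖ ^ 2 := by
      gcongr
      linarith [hc.1]
    calc ξ / l * (∫ t in (0 : ℝ)..l, ‖u t‖ ^ 2) = ξ * ‖u c‖ ^ 2 := by rw [hmean]; ring
      _ ≤ (c + ξ) * ‖u c‖ ^ 2 := hshift
  rw [hu.integral_norm_sq_eq_add hc.1.le, hu.integral_energyDensity_eq_add hc.1.le]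
  linarith

end FiniteEnergy

theorem Theta0_lt_deGennes_of_lt_sq {ξ : ℝ} (hξ : ξ < 0) (hsq : Theta0 < ξ ^ 2) :
    Theta0 < deGennes ξ := by
  set l := (Theta0 - ξ ^ 2) / (4 * ξ) with hl
  have hl_pos : 0 < l := div_pos_of_neg_of_neg (by linarith) (by linarith)
  have hgain_pos : 0 < ξ ^ 2 + 2 * l * ξ - Theta0 := by
    have hξ_ne : ξ ≠ 0 := hξ.ne
    have hshift : 2 * l * ξ = (Theta0 - ξ ^ 2) / 2 := by
      rw [hl]
      field_simp
      ring
    linarith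
  have hloss_pos : 0 < 1 - ξ / l := by linarith [div_neg_of_neg_of_pos hξ hl_pos]
  set k := (ξ ^ 2 + 2 * l * ξ - Theta0) / (1 - ξ / l)
  have hk_pos : 0 < k := div_pos hgain_pos hloss_pos
  have hk_mul : k * (1 - ξ / l) = ξ ^ 2 + 2 * l * ξ - Theta0 := div_mul_cancel₀ _ hloss_pos.ne'
  calc Theta0 < (Theta0 + k) / (1 + k) := by
        rw [lt_div_iff₀ (by positivity)]
        nlinarith [Theta0_lt_one]
    _ ≤ deGennes ξ := le_deGennes fun u hu => by
        refine add_div_one_add_mul_le hk_pos.le ?_ (hu.integral_norm_sq_sub_le hl_pos)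
        rw [← mul_assoc, hk_mul]
        exact hu.Theta0_mul_add_le_of_nonpos hξ.le hl_pos.le

section Minimizer

variable {ξ₀ : ℝ}

theorem neg_of_deGennes_eq_Theta0 (hξ₀ : deGennes ξ₀ = Theta0) : ξ₀ < 0 := by
  by_contra! hnonneg
  linarith [one_le_deGennes hnonneg, Theta0_lt_one]

theorem sq_le_Theta0_of_deGennes_eq_Theta0 (hξ₀ : deGennes ξ₀ = Theta0) : ξ₀ ^ 2 ≤ Theta0 := by
  by_contra! hsq
  exact (Theta0_lt_deGennes_of_lt_sq (neg_of_deGennes_eq_Theta0 hξ₀) hsq).ne' hξ₀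

end Minimizer

/-! ### Extending trial functions to the left by a constant -/

section Extension

variable {E : Type*} [NormedAddCommGroup E] [NormedSpace ℝ E] {u : ℝ → E}

/-- A `C¹` function equal to `u` on `[0, ∞)` whose derivative on `(-∞, 0]` is
`exp (κ t) u′(0)`. As `κ → ∞` it approximates the extension of `u` by the constant `u 0`, which
is not `C¹`. -/
def leftExtension (κ : ℝ) (u : ℝ → E) (t : ℝ) : E :=
  u 0 + ∫ s in (0 : ℝ)..t, Real.exp (κ * min s 0) • deriv u (max s 0)

theorem continuous_exp_smul_deriv_max (hu : ContDiff ℝ 1 u) (κ : ℝ) :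
    Continuous fun s => Real.exp (κ * min s 0) • deriv u (max s 0) := by fun_prop

variable [CompleteSpace E]

theorem hasDerivAt_leftExtension (hu : ContDiff ℝ 1 u) (κ t : ℝ) :
    HasDerivAt (leftExtension κ u) (Real.exp (κ * min t 0) • deriv u (max t 0)) t :=
  ((continuous_exp_smul_deriv_max hu κ).integral_hasStrictDerivAt 0 t).hasDerivAt.const_add _

theorem contDiff_leftExtension (hu : ContDiff ℝ 1 u) (κ : ℝ) :
    ContDiff ℝ 1 (leftExtension κ u) := by
  rw [contDiff_one_iff_deriv]
  refine ⟨fun t => (hasDerivAt_leftExtension hu κ t).differentiableAt, ?_⟩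
  rw [funext fun t => (hasDerivAt_leftExtension hu κ t).deriv]
  exact continuous_exp_smul_deriv_max hu κ

theorem leftExtension_of_nonneg (hu : ContDiff ℝ 1 u) (κ : ℝ) {t : ℝ} (ht : 0 ≤ t) :
    leftExtension κ u t = u t := by
  have hcongr : ∫ s in (0 : ℝ)..t, Real.exp (κ * min s 0) • deriv u (max s 0) =
      ∫ s in (0 : ℝ)..t, deriv u s := by
    refine intervalIntegral.integral_congr fun s hs => ?_
    rw [uIcc_of_le ht] at hs
    simp [hs.1]
  rw [leftExtension, hcongr, intervalIntegral.integral_deriv_eq_sub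
    (fun s _ => hu.differentiable one_ne_zero s) (hu.continuous_deriv_one.intervalIntegrable _ _),
    add_sub_cancel]

theorem deriv_leftExtension_of_nonneg (hu : ContDiff ℝ 1 u) (κ : ℝ) {t : ℝ} (ht : 0 ≤ t) :
    deriv (leftExtension κ u) t = deriv u t := by
  simp [(hasDerivAt_leftExtension hu κ t).deriv, ht]

theorem deriv_leftExtension_of_nonpos (hu : ContDiff ℝ 1 u) (κ : ℝ) {t : ℝ} (ht : t ≤ 0) :
    deriv (leftExtension κ u) t = Real.exp (κ * t) • deriv u 0 := by
  simp [(hasDerivAt_leftExtension hu κ t).deriv, ht]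

theorem leftExtension_of_nonpos (u : ℝ → E) {κ t : ℝ} (hκ : κ ≠ 0) (ht : t ≤ 0) :
    leftExtension κ u t = u 0 + (κ⁻¹ * (Real.exp (κ * t) - 1)) • deriv u 0 := by
  have hcongr : ∫ s in (0 : ℝ)..t, Real.exp (κ * min s 0) • deriv u (max s 0) =
      ∫ s in (0 : ℝ)..t, Real.exp (κ * s) • deriv u 0 := by
    refine intervalIntegral.integral_congr fun s hs => ?_
    rw [uIcc_of_ge ht] at hs
    simp [hs.2]
  rw [leftExtension, hcongr, intervalIntegral.integral_smul_const,
    intervalIntegral.integral_comp_mul_left _ hκ, integral_exp]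
  simp

theorem norm_leftExtension_sub_le (u : ℝ → E) {κ t : ℝ} (hκ : 0 < κ) (ht : t ≤ 0) :
    ‖leftExtension κ u t - u 0‖ ≤ κ⁻¹ * ‖deriv u 0‖ := by
  have hexp : |Real.exp (κ * t) - 1| ≤ 1 := by
    have := Real.exp_le_one_iff.2 (mul_nonpos_of_nonneg_of_nonpos hκ.le ht)
    rw [abs_le]
    constructor <;> linarith [Real.exp_pos (κ * t)]
  rw [leftExtension_of_nonpos u hκ.ne' ht, add_sub_cancel_left, norm_smul, norm_mul, norm_inv,
    Real.norm_of_nonneg hκ.le, Real.norm_eq_abs]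
  gcongr
  exact mul_le_of_le_one_right (by positivity) hexp

theorem tendsto_leftExtension (u : ℝ → E) {t : ℝ} (ht : t ≤ 0) :
    Tendsto (fun κ => leftExtension κ u t) atTop (𝓝 (u 0)) := by
  rw [tendsto_iff_norm_sub_tendsto_zero]
  refine squeeze_zero' (Eventually.of_forall fun κ => norm_nonneg _) ?_
    (by simpa using tendsto_inv_atTop_zero.mul_const ‖deriv u 0‖)
  filter_upwards [eventually_gt_atTop 0] with κ hκ using norm_leftExtension_sub_le u hκ ht

theorem tendsto_integral_mul_norm_leftExtension_sq (hu : ContDiff ℝ 1 u) {p : ℝ → ℝ}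
    (hp : Continuous p) {l : ℝ} (hl : 0 ≤ l) :
    Tendsto (fun κ => ∫ t in -l..0, p t * ‖leftExtension κ u t‖ ^ 2) atTop
      (𝓝 ((∫ t in -l..0, p t) * ‖u 0‖ ^ 2)) := by
  rw [← intervalIntegral.integral_mul_const]
  refine intervalIntegral.tendsto_integral_filter_of_dominated_convergence
    (fun t => |p t| * (‖u 0‖ + ‖deriv u 0‖) ^ 2) ?_ ?_ ?_ ?_
  · refine Eventually.of_forall fun κ => ?_
    have := (contDiff_leftExtension hu κ).continuous
    exact Continuous.aestronglyMeasurable (by fun_prop)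
  · filter_upwards [eventually_ge_atTop 1] with κ hκ
    refine ae_of_all _ fun t ht => ?_
    rw [uIoc_of_le (by linarith)] at ht
    rw [norm_mul, norm_pow, norm_norm, Real.norm_eq_abs]
    gcongr
    have hdist := norm_leftExtension_sub_le u (by linarith) ht.2
    have hinv : κ⁻¹ * ‖deriv u 0‖ ≤ ‖deriv u 0‖ :=
      mul_le_of_le_one_left (norm_nonneg _) (inv_le_one_of_one_le₀ hκ)
    linarith [norm_le_norm_add_norm_sub' (leftExtension κ u t) (u 0)]
  · exact Continuous.intervalIntegrable (by fun_prop) _ _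
  · refine ae_of_all _ fun t ht => ?_
    rw [uIoc_of_le (by linarith)] at ht
    exact ((tendsto_leftExtension u ht.2).norm.pow 2).const_mul _

theorem tendsto_integral_norm_deriv_leftExtension_sq (hu : ContDiff ℝ 1 u) {l : ℝ}
    (hl : 0 ≤ l) :
    Tendsto (fun κ => ∫ t in -l..0, ‖deriv (leftExtension κ u) t‖ ^ 2) atTop (𝓝 0) := by
  have hnorm : ∀ κ, ∀ t ≤ 0, ‖deriv (leftExtension κ u) t‖ =
      Real.exp (κ * t) * ‖deriv u 0‖ := fun κ t ht => by
    rw [deriv_leftExtension_of_nonpos hu κ ht, norm_smul, Real.norm_of_nonneg (Real.exp_pos _).le]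
  rw [show 𝓝 (0 : ℝ) = 𝓝 (∫ _ in -l..0, (0 : ℝ)) by rw [intervalIntegral.integral_zero]]
  refine intervalIntegral.tendsto_integral_filter_of_dominated_convergence
    (fun _ => ‖deriv u 0‖ ^ 2) ?_ ?_ (continuous_const.intervalIntegrable _ _) ?_
  · refine Eventually.of_forall fun κ => ?_
    have := (contDiff_leftExtension hu κ).continuous_deriv_one
    exact Continuous.aestronglyMeasurable (by fun_prop)
  · filter_upwards [eventually_ge_atTop 0] with κ hκ
    refine ae_of_all _ fun t ht => ?_
    rw [uIoc_of_le (by linarith)] at ht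
    rw [norm_pow, norm_norm, hnorm κ t ht.2]
    gcongr
    exact mul_le_of_le_one_left (norm_nonneg _)
      (Real.exp_le_one_iff.2 (mul_nonpos_of_nonneg_of_nonpos hκ ht.2))
  · filter_upwards [Measure.ae_ne volume 0] with t ht_ne ht
    rw [uIoc_of_le (by linarith)] at ht
    have hexp : Tendsto (fun κ => Real.exp (κ * t)) atTop (𝓝 0) :=
      Real.tendsto_exp_atBot.comp (tendsto_id.atTop_mul_const_of_neg (ht.2.lt_of_ne ht_ne))
    simpa [hnorm _ t ht.2] using (hexp.mul_const ‖deriv u 0‖).pow 2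

theorem tendsto_integral_energyDensity_leftExtension (hu : ContDiff ℝ 1 u) (ξ : ℝ) {l : ℝ}
    (hl : 0 ≤ l) :
    Tendsto (fun κ => ∫ t in -l..0, energyDensity ξ (leftExtension κ u) t) atTop
      (𝓝 ((ξ ^ 3 - (ξ - l) ^ 3) / 3 * ‖u 0‖ ^ 2)) := by
  have hpotential : ∫ t in -l..0, (t + ξ) ^ 2 = (ξ ^ 3 - (ξ - l) ^ 3) / 3 := by
    rw [intervalIntegral.integral_comp_add_right (fun t => t ^ 2), integral_pow,
      zero_add, neg_add_eq_sub]
    norm_num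
  rw [← hpotential, ← zero_add (_ * _)]
  refine ((tendsto_integral_norm_deriv_leftExtension_sq hu hl).add
    (tendsto_integral_mul_norm_leftExtension_sq hu
      (by fun_prop : Continuous fun t : ℝ => (t + ξ) ^ 2) hl)).congr fun κ => ?_
  have hcont := (contDiff_leftExtension hu κ).continuous
  have hderiv := (contDiff_leftExtension hu κ).continuous_deriv_one
  exact (intervalIntegral.integral_add (Continuous.intervalIntegrable (by fun_prop) _ _)
    (Continuous.intervalIntegrable (by fun_prop) _ _)).symm

theorem energyDensity_leftExtension_of_nonneg (hu : ContDiff ℝ 1 u) (κ ξ : ℝ) {t : ℝ}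
    (ht : 0 ≤ t) : energyDensity ξ (leftExtension κ u) t = energyDensity ξ u t := by
  rw [energyDensity, leftExtension_of_nonneg hu κ ht, deriv_leftExtension_of_nonneg hu κ ht,
    energyDensity]

theorem finiteEnergy_leftExtension {ξ : ℝ} (hu : FiniteEnergy ξ 0 u) (κ : ℝ) {a : ℝ}
    (ha : a ≤ 0) : FiniteEnergy ξ a (leftExtension κ u) := by
  have hC1 := contDiff_leftExtension hu.contDiff κ
  have hcont : Continuous fun t => ‖leftExtension κ u t‖ ^ 2 := hC1.continuous.norm.pow 2
  have hunion : Ioc a 0 ∪ Ioi 0 = Ioi a := Ioc_union_Ioi_eq_Ioi ha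
  refine ⟨hC1, ?_, ?_⟩ <;> rw [← hunion]
  · refine hcont.integrableOn_Ioc.union
      (hu.integrableOn_norm_sq.congr_fun (fun t ht => ?_) measurableSet_Ioi)
    simp only [leftExtension_of_nonneg hu.contDiff κ (le_of_lt ht)]
  · exact (continuous_energyDensity hC1 ξ).integrableOn_Ioc.union
      (hu.integrableOn_energyDensity.congr_fun (fun t ht =>
        (energyDensity_leftExtension_of_nonneg hu.contDiff κ ξ (le_of_lt ht)).symm)
        measurableSet_Ioi)

end Extension

namespace FiniteEnergy

variable {ξ l : ℝ} {u : ℝ → ℂ}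

theorem Theta0_mul_leftExtension_le (hu : FiniteEnergy ξ 0 u) (κ : ℝ) {a : ℝ} (ha : a ≤ 0) :
    Theta0 * ((∫ t in a..0, ‖leftExtension κ u t‖ ^ 2) + ∫ t in Ioi (0 : ℝ), ‖u t‖ ^ 2) ≤
      (∫ t in a..0, energyDensity ξ (leftExtension κ u) t) +
        ∫ t in Ioi (0 : ℝ), energyDensity ξ u t := by
  have hext := finiteEnergy_leftExtension hu κ ha
  have hmass : ∫ t in Ioi (0 : ℝ), ‖leftExtension κ u t‖ ^ 2 =
      ∫ t in Ioi (0 : ℝ), ‖u t‖ ^ 2 :=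
    setIntegral_congr_fun measurableSet_Ioi fun t ht => by
      simp only [leftExtension_of_nonneg hu.contDiff κ (le_of_lt ht)]
  have henergy : ∫ t in Ioi (0 : ℝ), energyDensity ξ (leftExtension κ u) t =
      ∫ t in Ioi (0 : ℝ), energyDensity ξ u t :=
    setIntegral_congr_fun measurableSet_Ioi fun t ht =>
      energyDensity_leftExtension_of_nonneg hu.contDiff κ ξ (le_of_lt ht)
  rw [← hmass, ← henergy, ← hext.integral_norm_sq_eq_add ha,
    ← hext.integral_energyDensity_eq_add ha]
  exact hext.Theta0_mul_le

theorem Theta0_mul_add_boundary_le (hu : FiniteEnergy ξ 0 u) (hl : 0 ≤ l) :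
    Theta0 * ((∫ t in Ioi (0 : ℝ), ‖u t‖ ^ 2) + l * ‖u 0‖ ^ 2) ≤
      (∫ t in Ioi (0 : ℝ), energyDensity ξ u t) +
        (ξ ^ 3 - (ξ - l) ^ 3) / 3 * ‖u 0‖ ^ 2 := by
  have hmass := tendsto_integral_mul_norm_leftExtension_sq hu.contDiff
    (continuous_const (y := (1 : ℝ))) hl
  have henergy := tendsto_integral_energyDensity_leftExtension hu.contDiff ξ hl
  simp only [one_mul, intervalIntegral.integral_const, zero_sub, neg_neg, smul_eq_mul, mul_one]
    at hmass
  have hlimit := le_of_tendsto_of_tendsto' ((hmass.add_const _).const_mul Theta0)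
    (henergy.add_const _) fun κ => hu.Theta0_mul_leftExtension_le κ (neg_nonpos.2 hl)
  linarith

end FiniteEnergy

/-! ### The quadratic gap to the right of a minimizer -/

section Gap

variable {ξ₀ ξ : ℝ}

theorem quadratic_gap_le_deGennes (hξ₀ : deGennes ξ₀ = Theta0) (hξ : ξ₀ ≤ ξ) :
    (Theta0 + 2 / 3 * (ξ - ξ₀) ^ 2) / (1 + 2 / 3 * (ξ - ξ₀) ^ 2) ≤ deGennes ξ := by
  rcases le_total 0 ξ with hξ_nonneg | hξ_nonpos
  · refine le_trans ?_ (one_le_deGennes hξ_nonneg)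
    rw [div_le_one (by positivity)]
    linarith [Theta0_lt_one]
  obtain ⟨l, rfl⟩ : ∃ l, ξ = ξ₀ + l := ⟨ξ - ξ₀, by ring⟩
  have hl : 0 ≤ l := by linarith
  rw [add_sub_cancel_left]
  refine le_deGennes fun u hu => add_div_one_add_mul_le (z := -ξ₀ * ‖u 0‖ ^ 2) (by positivity) ?_ ?_
  · have hext := hu.Theta0_mul_add_boundary_le hl
    have hcoeff : 2 / 3 * l ^ 2 * -ξ₀ ≤ Theta0 * l - ((ξ₀ + l) ^ 3 - (ξ₀ + l - l) ^ 3) / 3 := by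
      have hlinear : 0 ≤ (Theta0 - ξ₀ ^ 2) * l :=
        mul_nonneg (sub_nonneg.2 (sq_le_Theta0_of_deGennes_eq_Theta0 hξ₀)) hl
      have hcubic : 0 ≤ (-ξ₀ - l) * l ^ 2 := mul_nonneg (by linarith) (sq_nonneg l)
      linarith
    linarith [mul_le_mul_of_nonneg_right hcoeff (sq_nonneg ‖u 0‖)]
  · linarith [hu.integral_norm_sq_add_le, mul_nonneg hl (sq_nonneg ‖u 0‖)]

theorem Theta0_add_le_deGennes (hξ₀ : deGennes ξ₀ = Theta0) {d : ℝ} (hd : 0 ≤ d) (hd_one : d ≤ 1)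
    (hξ : ξ₀ + d ≤ ξ) : Theta0 + (1 - Theta0) / 3 * d ^ 2 ≤ deGennes ξ := by
  refine le_trans ?_ (quadratic_gap_le_deGennes hξ₀ (by linarith))
  rw [le_div_iff₀ (by positivity)]
  have hsq : d ^ 2 ≤ (ξ - ξ₀) ^ 2 := by gcongr; linarith
  have hsq_one : d ^ 2 ≤ 1 := pow_le_one₀ hd hd_one
  have hgain : d ^ 2 / 3 * (1 + 2 / 3 * (ξ - ξ₀) ^ 2) ≤ 2 / 3 * (ξ - ξ₀) ^ 2 := by
    nlinarith [sq_nonneg (ξ - ξ₀)]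
  linarith [mul_le_mul_of_nonneg_left hgain (sub_nonneg.2 Theta0_lt_one.le)]

end Gap

/-! ### Slicing the half plane -/

section HalfPlane

variable {B : ℝ} {m : ℤ} {ψ : ℝ × ℝ → ℂ}

theorem volume_restrict_halfPlane :
    (volume : Measure (ℝ × ℝ)).restrict halfPlane = (volume.restrict (Ioi 0)).prod volume := by
  rw [halfPlane, Measure.volume_eq_prod, ← Measure.prod_restrict, Measure.restrict_univ]

theorem deriv_slice {E : Type*} [NormedAddCommGroup E] [NormedSpace ℝ E] {f : ℝ × ℝ → E}
    {t ρ : ℝ} (hf : DifferentiableAt ℝ f (t, ρ)) :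
    deriv (fun s => f (s, ρ)) t = fderiv ℝ f (t, ρ) (1, 0) :=
  (hf.hasFDerivAt.comp_hasDerivAt t ((hasDerivAt_id t).prodMk (hasDerivAt_const t ρ))).deriv

theorem energyDensity_slice_le_qIntegrand (hB : 0 ≤ B) (m : ℤ) (hψ : Differentiable ℝ ψ)
    (t ρ : ℝ) :
    energyDensity (((m : ℝ) - B / 2) / √B + B ^ (-(1 : ℝ) / 6) * ρ ^ 2 / 2)
      (fun s => ψ (s, ρ)) t ≤ qIntegrand B m ψ (t, ρ) := by
  rw [energyDensity, qIntegrand, qPot, deriv_slice (hψ _), ← add_assoc]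
  exact le_add_of_nonneg_right (by positivity)

theorem mul_integral_norm_sq_le_qForm {c : ℝ} (hB : 0 ≤ B)
    (hc : ∀ ξ, ((m : ℝ) - B / 2) / √B ≤ ξ → c ≤ deGennes ξ) (hψ : InFormDomain B m ψ) :
    c * (∫ p in halfPlane, ‖ψ p‖ ^ 2) ≤ qForm B m ψ := by
  obtain ⟨hC1, hmass, henergy⟩ := hψ
  rw [IntegrableOn, volume_restrict_halfPlane] at hmass henergy
  rw [qForm, volume_restrict_halfPlane, integral_prod_symm _ hmass, integral_prod_symm _ henergy,
    ← integral_const_mul]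
  refine integral_mono_ae (hmass.integral_prod_right.const_mul c) henergy.integral_prod_right ?_
  filter_upwards [hmass.prod_left_ae, henergy.prod_left_ae] with ρ hmassρ henergyρ
  have hle := energyDensity_slice_le_qIntegrand hB m (hC1.differentiable one_ne_zero) (ρ := ρ)
  set ξ := ((m : ℝ) - B / 2) / √B + B ^ (-(1 : ℝ) / 6) * ρ ^ 2 / 2
  have hslice : ContDiff ℝ 1 fun t => ψ (t, ρ) := by fun_prop
  have hfinite : FiniteEnergy ξ 0 fun t => ψ (t, ρ) := by
    refine ⟨hslice, hmassρ, henergyρ.mono'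
      (continuous_energyDensity hslice ξ).aestronglyMeasurable (ae_of_all _ fun t => ?_)⟩
    rw [Real.norm_of_nonneg (energyDensity_nonneg _ _ _)]
    exact hle t
  have hcξ : c ≤ deGennes ξ := hc ξ (le_add_of_nonneg_right (by positivity))
  calc c * ∫ t in Ioi (0 : ℝ), ‖ψ (t, ρ)‖ ^ 2
      ≤ deGennes ξ * ∫ t in Ioi (0 : ℝ), ‖ψ (t, ρ)‖ ^ 2 := by gcongr
    _ ≤ ∫ t in Ioi (0 : ℝ), energyDensity ξ (fun s => ψ (s, ρ)) t := hfinite.deGennes_mul_le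
    _ ≤ ∫ t in Ioi (0 : ℝ), qIntegrand B m ψ (t, ρ) :=
        integral_mono hfinite.integrableOn_energyDensity henergyρ hle

theorem add_lt_of_lt_delta1 {ξ₀ D : ℝ} (hB : 0 < B) (hD : D < delta1 B m ξ₀) :
    ξ₀ + D * B ^ (-(1 : ℝ) / 6) < ((m : ℝ) - B / 2) / √B := by
  have hpow : 0 < B ^ ((1 : ℝ) / 6) := Real.rpow_pos_of_pos hB _
  rw [delta1, ← div_lt_iff₀ hpow] at hD
  rw [neg_div, Real.rpow_neg hB.le, ← div_eq_mul_inv]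
  linarith

theorem mul_rpow_lt_one {D : ℝ} (hD : 0 ≤ D) (hDB : D ^ 6 < B) :
    D * B ^ (-(1 : ℝ) / 6) < 1 := by
  have hB : 0 < B := lt_of_le_of_lt (by positivity) hDB
  rw [neg_div, Real.rpow_neg hB.le, ← div_eq_mul_inv, div_lt_one (by positivity), one_div,
    Real.lt_rpow_inv_iff_of_pos hD hB.le (by norm_num)]
  exact_mod_cast hDB

end HalfPlane

/-- Lemma 2.9: lower bound for large positive `δ̃₁`. -/
theorem statement5
    (ξ₀ : ℝ) (hξ₀ : deGennes ξ₀ = Theta0)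
    (hξ₀uniq : ∀ ξ : ℝ, deGennes ξ = Theta0 → ξ = ξ₀) :
    ∃ C : ℝ, 0 < C ∧
      ∀ D : ℝ, 0 < D → ∀ B : ℝ, D ^ 6 < B → ∀ m : ℤ, D < delta1 B m ξ₀ →
        ∀ ψ : ℝ × ℝ → ℂ, InFormDomain B m ψ →
          (Theta0 + C * D ^ 2 * B ^ (-(1:ℝ)/3)) * (∫ p in halfPlane, ‖ψ p‖ ^ 2)
            ≤ qForm B m ψ := by
  refine ⟨(1 - Theta0) / 3, by linarith [Theta0_lt_one], fun D hD B hDB m hm ψ hψ => ?_⟩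
  have hB : 0 < B := lt_trans (by positivity) hDB
  have hgap : ∀ ξ, ((m : ℝ) - B / 2) / √B ≤ ξ →
      Theta0 + (1 - Theta0) / 3 * (D * B ^ (-(1 : ℝ) / 6)) ^ 2 ≤ deGennes ξ := fun ξ hξ =>
    Theta0_add_le_deGennes hξ₀ (by positivity) (mul_rpow_lt_one hD.le hDB).le
      ((add_lt_of_lt_delta1 hB hm).le.trans hξ)
  have hscale : (B ^ (-(1 : ℝ) / 6)) ^ 2 = B ^ (-(1 : ℝ) / 3) := by
    rw [← Real.rpow_mul_natCast hB.le]
    norm_num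
  rw [mul_assoc, ← hscale, ← mul_pow]
  exact mul_integral_norm_sq_le_qForm hB.le hgap hψ
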